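/- For every pair of nontrivial words w₁ ∈ F_{d₁} and w₂ ∈ F_{d₂}, there exists a natural number N such that for every integer n ≥ N, every element of the compact symplectic group Sp(n) is a product g₁g₂ with g₁ ∈ w₁(Sp(n)) and g₂ ∈ w₂(Sp(n)); that is, Sp(n) = w₁(Sp(n))·w₂(Sp(n)). -/

import Mathlib

open scoped Matrix

/-- The set of `w`-values in the subgroup of `G` given by the set `S`:
elements obtained by evaluating the word `w` at a `d`-tuple of elements of `S`. -/
def wordValuesIn {d : ℕ} {G : Type*} [Group G] (w : FreeGroup (Fin d)) (S : Set G) : Set G :=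
  {x | ∃ g : Fin d → G, (∀ i, g i ∈ S) ∧ FreeGroup.lift g w = x}

/-- The standard symplectic form `J = [[0, I_n], [-I_n, 0]]`. -/
def sympJ (n : ℕ) : Matrix (Fin n ⊕ Fin n) (Fin n ⊕ Fin n) ℂ :=
  Matrix.fromBlocks 0 1 (-1) 0

/-- The compact symplectic group `Sp(n) = U(2n) ∩ Sp(2n, ℂ)`, as the subset of the
unitary group of `2n × 2n` complex matrices `M` satisfying `Mᵀ J M = J`. -/
def CompactSp (n : ℕ) : Set (Matrix.unitaryGroup (Fin n ⊕ Fin n) ℂ) :=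
  {M | (M : Matrix (Fin n ⊕ Fin n) (Fin n ⊕ Fin n) ℂ)ᵀ * sympJ n *
        (M : Matrix (Fin n ⊕ Fin n) (Fin n ⊕ Fin n) ℂ) = sympJ n}

/-!
Every `x ∈ Sp(n)` is conjugate to an element `t` of the diagonal maximal torus. Let `c` be the
signed cyclic shift of all `2n` coordinates. Both `c` and `c⁻¹ t` have all `2n` solutions of
`z ^ (2n) = -1` as eigenvalues, so both are conjugate to the diagonal element `T` with these
eigenvalues, and `x` is a product of two conjugates of `T`, whatever the words are.

It remains to see that `T` is a value of any given nontrivial word when `n` is large. Now `T` is the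
image of `diag(ζ, ζ⁻¹)`, `ζ = e^{iπ/2n}`, under the symmetric power `Sp(1) → Sp(n)` of degree
`2n - 1`, and `ζ → 1`. So it suffices that the values of a nontrivial word on `Sp(1)` contain a
neighbourhood of `1` in the maximal torus. Substituting for the letters rotations by a common
parameter `z` in the unit circle about distinct axes gives a continuous family of values which is
`1` at `z = 1` but not constant: its entries are Laurent polynomials in `z`, and the leading
coefficient is a product of rank one projections which does not vanish for a reduced word. By the
intermediate value theorem the traces of this family fill an interval `[2 - ε, 2]`, and the trace
determines the conjugacy class in `Sp(1)`.
-/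

open Matrix Filter
open scoped Topology

/-! ### The quaternionic structure -/

section QuaternionicStructure

variable {ι : Type*}

/-- The quaternionic structure `v ↦ -J v̄` on `ℂ^ι ⊕ ℂ^ι`, i.e. multiplication by the quaternion
`j` on `ℍ^ι`. The symplectic condition on a unitary matrix amounts to commuting with it
(`mem_compactSp_iff`). -/
def quaternionJ : (ι ⊕ ι → ℂ) →ₛₗ[starRingEnd ℂ] (ι ⊕ ι → ℂ) where
  toFun v := Sum.elim (fun k => -star (v (.inr k))) (fun k => star (v (.inl k)))
  map_add' u v := by ext (k | k) <;> simp [add_comm]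
  map_smul' c v := by ext (k | k) <;> simp

@[simp] lemma quaternionJ_apply_inl (v : ι ⊕ ι → ℂ) (k : ι) :
    quaternionJ v (.inl k) = -star (v (.inr k)) := rfl

@[simp] lemma quaternionJ_apply_inr (v : ι ⊕ ι → ℂ) (k : ι) :
    quaternionJ v (.inr k) = star (v (.inl k)) := rfl

variable [Fintype ι]

lemma star_quaternionJ_dotProduct (u v : ι ⊕ ι → ℂ) :
    star (quaternionJ u) ⬝ᵥ v = -(star (quaternionJ v) ⬝ᵥ u) := by
  simp [dotProduct, Fintype.sum_sum_type, mul_comm]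

lemma star_quaternionJ_dotProduct_self (v : ι ⊕ ι → ℂ) : star (quaternionJ v) ⬝ᵥ v = 0 :=
  self_eq_neg.mp (star_quaternionJ_dotProduct v v)

lemma star_quaternionJ_dotProduct_quaternionJ (u v : ι ⊕ ι → ℂ) :
    star (quaternionJ u) ⬝ᵥ quaternionJ v = star v ⬝ᵥ u := by
  simp [dotProduct, Fintype.sum_sum_type, mul_comm, add_comm]

lemma quaternionJ_eq_neg_sympJ_mulVec {n : ℕ} (v : Fin n ⊕ Fin n → ℂ) :
    quaternionJ v = -(sympJ n *ᵥ star v) := by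
  ext (k | k) <;> simp [sympJ, fromBlocks_mulVec, neg_mulVec]

lemma sympJ_mul_self (n : ℕ) : sympJ n * sympJ n = -1 := by
  simp [sympJ, fromBlocks_multiply, ← fromBlocks_one, fromBlocks_neg]

lemma mem_compactSp_iff {n : ℕ} {M : unitaryGroup (Fin n ⊕ Fin n) ℂ} :
    M ∈ CompactSp n ↔ ∀ v, M.1 *ᵥ quaternionJ v = quaternionJ (M.1 *ᵥ v) := by
  set A := M.1
  set J := sympJ n
  have hJ : J * J = -1 := sympJ_mul_self n
  have hA : Aᴴᵀ * Aᵀ = 1 := by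
    rw [← transpose_mul, ← star_eq_conjTranspose, mem_unitaryGroup_iff.mp M.2, transpose_one]
  have hA' : Aᵀ * Aᴴᵀ = 1 := mul_eq_one_comm.mp hA
  calc Aᵀ * J * A = J ↔ A * J = J * Aᴴᵀ := by
        constructor <;> intro h
        · calc A * J = -(J * (Aᴴᵀ * Aᵀ) * J * A * J) := by simp [hA, hJ]
            _ = -(J * Aᴴᵀ * (Aᵀ * J * A) * J) := by simp only [mul_assoc]
            _ = J * Aᴴᵀ := by rw [h]; simp [hJ, mul_assoc]
        · calc Aᵀ * J * A = -(Aᵀ * J * (A * J) * J) := by simp [hJ, mul_assoc]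
            _ = -(Aᵀ * (J * J) * Aᴴᵀ * J) := by rw [h]; simp only [mul_assoc]
            _ = J := by simp [hJ, hA']
    _ ↔ ∀ v, (A * J) *ᵥ star v = (J * Aᴴᵀ) *ᵥ star v :=
        ext_iff_mulVec.trans (star_involutive.surjective.forall)
    _ ↔ ∀ v, A *ᵥ quaternionJ v = quaternionJ (A *ᵥ v) := by
        simp [quaternionJ_eq_neg_sympJ_mulVec, star_mulVec, mulVec_neg, J,
          ← mulVec_transpose]

end QuaternionicStructure

/-! ### Word values, the group `Sp(n)` and its torus -/

lemma map_mem_wordValuesIn {d : ℕ} {G H : Type*} [Group G] [Group H] {w : FreeGroup (Fin d)}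
    (f : G →* H) {S : Set G} {T : Set H} (hST : Set.MapsTo f S T) {x : G}
    (hx : x ∈ wordValuesIn w S) : f x ∈ wordValuesIn w T := by
  obtain ⟨g, hg, rfl⟩ := hx
  refine ⟨f ∘ g, fun i => hST (hg i), ?_⟩
  exact (FreeGroup.lift_unique (f.comp (FreeGroup.lift g)) (by simp)).symm

lemma conj_mem_wordValuesIn {d : ℕ} {G : Type*} [Group G] {w : FreeGroup (Fin d)}
    {K : Subgroup G} {p x : G} (hp : p ∈ K) (hx : x ∈ wordValuesIn w (K : Set G)) :
    p * x * p⁻¹ ∈ wordValuesIn w (K : Set G) :=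
  map_mem_wordValuesIn (MulAut.conj p).toMonoidHom
    (fun _ hg => K.mul_mem (K.mul_mem hp hg) (K.inv_mem hp)) hx

lemma wordValuesIn_subset {d : ℕ} {G : Type*} [Group G] (w : FreeGroup (Fin d)) (K : Subgroup G) :
    wordValuesIn w (K : Set G) ⊆ K := by
  rintro _ ⟨g, hg, rfl⟩
  exact FreeGroup.range_lift_le (Set.range_subset_iff.mpr hg) ⟨w, rfl⟩

/-- `CompactSp n` as a subgroup of the unitary group. -/
def compactSpSubgroup (n : ℕ) : Subgroup (unitaryGroup (Fin n ⊕ Fin n) ℂ) where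
  carrier := CompactSp n
  one_mem' := mem_compactSp_iff.mpr fun v => by simp
  mul_mem' {A B} hA hB := mem_compactSp_iff.mpr fun v => by
    rw [UnitaryGroup.mul_val, ← mulVec_mulVec, mem_compactSp_iff.mp hB, mem_compactSp_iff.mp hA,
      mulVec_mulVec]
  inv_mem' {A} hA := mem_compactSp_iff.mpr fun v => by
    rw [UnitaryGroup.inv_val]
    have hA' : star A.1 * A.1 = 1 := UnitaryGroup.star_mul_self A
    have hA'' : A.1 * star A.1 = 1 := mem_unitaryGroup_iff.mp A.2
    calc star A.1 *ᵥ quaternionJ v = star A.1 *ᵥ quaternionJ (A.1 *ᵥ star A.1 *ᵥ v) := by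
          rw [mulVec_mulVec, hA'', one_mulVec]
      _ = quaternionJ (star A.1 *ᵥ v) := by
          rw [← mem_compactSp_iff.mp hA, mulVec_mulVec, hA', one_mulVec]

lemma star_mulVec_dotProduct_mulVec {m : Type*} [Fintype m] [DecidableEq m]
    (x : unitaryGroup m ℂ) (u v : m → ℂ) : star (x.1 *ᵥ u) ⬝ᵥ x.1 *ᵥ v = star u ⬝ᵥ v := by
  rw [star_mulVec, ← dotProduct_mulVec, mulVec_mulVec, ← star_eq_conjTranspose,
    UnitaryGroup.star_mul_self, one_mulVec]

/-- The maximal torus of `Sp(n)`: the diagonal matrices with entries `μ k` in the first block and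
`(μ k)⁻¹` in the second. -/
noncomputable def torus {ι : Type*} [Fintype ι] [DecidableEq ι] :
    (ι → Circle) →* unitaryGroup (ι ⊕ ι) ℂ where
  toFun μ := ⟨diagonal fun p => ((Sum.elim μ μ⁻¹ p : Circle) : ℂ), by
    rw [mem_unitaryGroup_iff, star_eq_conjTranspose, diagonal_conjTranspose, diagonal_mul_diagonal,
      ← diagonal_one]
    congr! 2 with p
    simp [Complex.mul_conj]⟩
  map_one' := by ext (i | i) (j | j) <;> simp [diagonal_apply, one_apply]
  map_mul' μ ν := by
    ext (i | i) (j | j) <;> simp [diagonal_apply, mul_comm]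

section Torus

variable {ι : Type*} [Fintype ι] [DecidableEq ι]

lemma coe_torus (μ : ι → Circle) :
    (torus μ).1 = diagonal fun p => ((Sum.elim μ μ⁻¹ p : Circle) : ℂ) := rfl

lemma torus_mulVec (μ : ι → Circle) (v : ι ⊕ ι → ℂ) :
    (torus μ).1 *ᵥ v = fun p => ((Sum.elim μ μ⁻¹ p : Circle) : ℂ) * v p := by
  ext p
  rw [coe_torus, mulVec_diagonal]

end Torus

lemma torus_mem_compactSp {n : ℕ} (μ : Fin n → Circle) : torus μ ∈ CompactSp n :=
  mem_compactSp_iff.mpr fun v => by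
    ext (k | k) <;> simp [torus_mulVec, ← Circle.coe_inv_eq_conj]

/-! ### Eigenvectors of unitary matrices -/

section UnitaryEigenvectors

variable {m : Type*} [Fintype m]

lemma exists_smul_dotProduct_self_eq_one {u : m → ℂ} (hu : u ≠ 0) :
    ∃ c : ℂ, star (c • u) ⬝ᵥ (c • u) = 1 := by
  have hu' : WithLp.toLp 2 u ≠ 0 := by simpa using hu
  refine ⟨(‖WithLp.toLp 2 u‖⁻¹ : ℝ), ?_⟩
  rw [dotProduct_comm, ← EuclideanSpace.inner_toLp_toLp, WithLp.toLp_smul,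
    inner_self_eq_norm_sq_to_K]
  simp [norm_smul, hu']

variable [DecidableEq m]

lemma star_dotProduct_eq_zero_of_eigenvalues_ne {x : unitaryGroup m ℂ} {u v : m → ℂ} {a b : Circle}
    (hu : x.1 *ᵥ u = (a : ℂ) • u) (hv : x.1 *ᵥ v = (b : ℂ) • v) (hab : a ≠ b) :
    star u ⬝ᵥ v = 0 := by
  have h : ((a⁻¹ * b : Circle) : ℂ) * (star u ⬝ᵥ v) = star u ⬝ᵥ v := by
    conv_rhs => rw [← star_mulVec_dotProduct_mulVec x, hu, hv]
    rw [Circle.coe_mul, Circle.coe_inv_eq_conj]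
    simp [mul_left_comm, mul_assoc]
  rw [mul_left_eq_self₀] at h
  refine h.resolve_left fun h1 => hab ?_
  rwa [← inv_mul_eq_one, ← Circle.coe_eq_one]

lemma norm_eigenvalue_eq_one {x : unitaryGroup m ℂ} {u : m → ℂ} {c : ℂ}
    (hu : star u ⬝ᵥ u = 1) (hc : x.1 *ᵥ u = c • u) : ‖c‖ = 1 := by
  have h := star_mulVec_dotProduct_mulVec x u u
  rw [hc, star_smul, smul_dotProduct, dotProduct_smul, hu, smul_eq_mul, smul_eq_mul, mul_one,
    RCLike.star_def, Complex.conj_mul'] at h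
  exact (pow_eq_one_iff_of_nonneg (norm_nonneg c) two_ne_zero).mp (mod_cast h)

lemma exists_unit_eigenvector_mem (x : unitaryGroup m ℂ) {W : Submodule ℂ (m → ℂ)} (hW : W ≠ ⊥)
    (hxW : ∀ w ∈ W, x.1 *ᵥ w ∈ W) :
    ∃ y ∈ W, star y ⬝ᵥ y = 1 ∧ ∃ c : Circle, x.1 *ᵥ y = (c : ℂ) • y := by
  have : Nontrivial W := Submodule.nontrivial_iff_ne_bot.mpr hW
  obtain ⟨c, hc⟩ := Module.End.exists_eigenvalue (x.1.mulVecLin.restrict hxW)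
  obtain ⟨u, hu⟩ := hc.exists_hasEigenvector
  have hxu : x.1 *ᵥ u.1 = c • u.1 := congrArg Subtype.val hu.apply_eq_smul
  obtain ⟨s, hs⟩ := exists_smul_dotProduct_self_eq_one (Subtype.coe_ne_coe.mpr hu.2)
  have hxsu : x.1 *ᵥ (s • u.1) = c • s • u.1 := by rw [mulVec_smul, hxu, smul_comm]
  have hc1 : ‖c‖ = 1 := norm_eigenvalue_eq_one hs hxsu
  exact ⟨s • u.1, W.smul_mem s u.2, hs, ⟨c, mem_sphere_zero_iff_norm.mpr hc1⟩, hxsu⟩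

end UnitaryEigenvectors

/-! ### Quaternionic frames and diagonalization -/

section QuaternionicFrames

variable {ι κ : Type*}

/-- The matrix with columns `v i` and `quaternionJ (v i)`. -/
def frameMatrix (v : κ → ι ⊕ ι → ℂ) : Matrix (ι ⊕ ι) (κ ⊕ κ) ℂ :=
  of fun p q => Sum.elim v (quaternionJ ∘ v) q p

/-- Orthonormality over the quaternions: the vectors `v i` and `quaternionJ (v i)` together are
orthonormal over `ℂ`. -/
structure QuaternionOrthonormal [Fintype ι] [DecidableEq κ] (v : κ → ι ⊕ ι → ℂ) : Prop where
  dotProduct_eq (i j : κ) : star (v i) ⬝ᵥ v j = if i = j then 1 else 0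
  quaternionJ_dotProduct_eq_zero (i j : κ) : star (quaternionJ (v i)) ⬝ᵥ v j = 0

lemma frameMatrix_mulVec_quaternionJ [Fintype κ] (v : κ → ι ⊕ ι → ℂ) (w : κ ⊕ κ → ℂ) :
    frameMatrix v *ᵥ quaternionJ w = quaternionJ (frameMatrix v *ᵥ w) := by
  ext (k | k) <;> simp [frameMatrix, mulVec, dotProduct, Fintype.sum_sum_type, add_comm, mul_comm]

lemma QuaternionOrthonormal.conjTranspose_mul_frameMatrix [Fintype ι] [DecidableEq κ]
    {v : κ → ι ⊕ ι → ℂ} (hv : QuaternionOrthonormal v) :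
    (frameMatrix v)ᴴ * frameMatrix v = 1 := by
  ext p q
  have h : ((frameMatrix v)ᴴ * frameMatrix v) p q =
      star (Sum.elim v (quaternionJ ∘ v) p) ⬝ᵥ Sum.elim v (quaternionJ ∘ v) q := rfl
  rw [h]
  rcases p with i | i <;> rcases q with j | j
  · simp [hv.dotProduct_eq, one_apply]
  · simp [star_dotProduct (v i), hv.quaternionJ_dotProduct_eq_zero]
  · simp [hv.quaternionJ_dotProduct_eq_zero]
  · simp [star_quaternionJ_dotProduct_quaternionJ, hv.dotProduct_eq, one_apply, eq_comm]

end QuaternionicFrames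

section Diagonalization

variable {n : ℕ} {x : unitaryGroup (Fin n ⊕ Fin n) ℂ}

lemma mulVec_quaternionJ_of_eigenvector (hx : x ∈ CompactSp n) {v : Fin n ⊕ Fin n → ℂ} {c : Circle}
    (hv : x.1 *ᵥ v = (c : ℂ) • v) :
    x.1 *ᵥ quaternionJ v = ((c⁻¹ : Circle) : ℂ) • quaternionJ v := by
  rw [mem_compactSp_iff.mp hx, hv, map_smulₛₗ, Circle.coe_inv_eq_conj]

variable {κ : Type*} [Fintype κ] [DecidableEq κ] {v : κ → Fin n ⊕ Fin n → ℂ} {μ : κ → Circle}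

lemma mul_frameMatrix (hx : x ∈ CompactSp n) (hxv : ∀ i, x.1 *ᵥ v i = (μ i : ℂ) • v i) :
    x.1 * frameMatrix v = frameMatrix v * (torus μ).1 := by
  have hcol : ∀ q, x.1 *ᵥ Sum.elim v (quaternionJ ∘ v) q =
      ((Sum.elim μ μ⁻¹ q : Circle) : ℂ) • Sum.elim v (quaternionJ ∘ v) q := by
    rintro (i | i)
    · exact hxv i
    · exact mulVec_quaternionJ_of_eigenvector hx (hxv i)
  ext p q
  rw [coe_torus, mul_diagonal, mul_comm]
  exact congrFun (hcol q) p

lemma conjTranspose_frameMatrix_mul (hx : x ∈ CompactSp n)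
    (hxv : ∀ i, x.1 *ᵥ v i = (μ i : ℂ) • v i) :
    (frameMatrix v)ᴴ * x.1 = (torus μ).1 * (frameMatrix v)ᴴ := by
  have hT : (torus μ).1 * (torus μ).1ᴴ = 1 := mem_unitaryGroup_iff.mp (torus μ).2
  have hx1 : x.1ᴴ * x.1 = 1 := mem_unitaryGroup_iff'.mp x.2
  calc (frameMatrix v)ᴴ * x.1
      = (torus μ).1 * (frameMatrix v * (torus μ).1)ᴴ * x.1 := by
        rw [conjTranspose_mul, ← Matrix.mul_assoc, hT, Matrix.one_mul]
    _ = (torus μ).1 * (frameMatrix v)ᴴ * (x.1ᴴ * x.1) := by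
        rw [← mul_frameMatrix hx hxv, conjTranspose_mul]; simp only [Matrix.mul_assoc]
    _ = (torus μ).1 * (frameMatrix v)ᴴ := by rw [hx1, Matrix.mul_one]

/-- The change of basis from the standard basis of `ℍ^n` to the orthonormal basis `v`. -/
def QuaternionOrthonormal.frameUnitary {v : Fin n → Fin n ⊕ Fin n → ℂ}
    (hv : QuaternionOrthonormal v) : unitaryGroup (Fin n ⊕ Fin n) ℂ :=
  ⟨frameMatrix v, mem_unitaryGroup_iff'.mpr hv.conjTranspose_mul_frameMatrix⟩

lemma QuaternionOrthonormal.frameUnitary_mem_compactSp {v : Fin n → Fin n ⊕ Fin n → ℂ}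
    (hv : QuaternionOrthonormal v) : hv.frameUnitary ∈ CompactSp n :=
  mem_compactSp_iff.mpr (frameMatrix_mulVec_quaternionJ v)

lemma exists_conj_torus_of_frame (hx : x ∈ CompactSp n) {v : Fin n → Fin n ⊕ Fin n → ℂ}
    {μ : Fin n → Circle} (hv : QuaternionOrthonormal v)
    (hxv : ∀ i, x.1 *ᵥ v i = (μ i : ℂ) • v i) :
    ∃ P ∈ CompactSp n, x = P * torus μ * P⁻¹ := by
  refine ⟨hv.frameUnitary, hv.frameUnitary_mem_compactSp, ?_⟩
  rw [eq_mul_inv_iff_mul_eq]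
  exact Subtype.ext (mul_frameMatrix hx hxv)

/-- The new vector is an eigenvector in the orthogonal complement of the frame, which is
`x`-invariant. -/
lemma exists_cons_eigenframe (hx : x ∈ CompactSp n) {k : ℕ} (hk : k < n)
    {v : Fin k → Fin n ⊕ Fin n → ℂ} {μ : Fin k → Circle} (hv : QuaternionOrthonormal v)
    (hxv : ∀ i, x.1 *ᵥ v i = (μ i : ℂ) • v i) :
    ∃ y, QuaternionOrthonormal (Fin.cons y v : Fin (k + 1) → Fin n ⊕ Fin n → ℂ) ∧
      ∃ c : Circle, x.1 *ᵥ y = (c : ℂ) • y := by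
  set W := LinearMap.ker (frameMatrix v)ᴴ.mulVecLin
  have hW : W ≠ ⊥ := LinearMap.ker_ne_bot_of_finrank_lt (by simp; lia)
  have hxW : ∀ w ∈ W, x.1 *ᵥ w ∈ W := fun w hw => by
    rw [LinearMap.mem_ker, mulVecLin_apply] at hw ⊢
    rw [mulVec_mulVec, conjTranspose_frameMatrix_mul hx hxv, ← mulVec_mulVec, hw, mulVec_zero]
  obtain ⟨y, hyW, hy, hc⟩ := exists_unit_eigenvector_mem x hW hxW
  have hvy : ∀ i, star (v i) ⬝ᵥ y = 0 := fun i => congrFun hyW (.inl i)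
  have hJvy : ∀ i, star (quaternionJ (v i)) ⬝ᵥ y = 0 := fun i => congrFun hyW (.inr i)
  refine ⟨y, ⟨fun i j => ?_, fun i j => ?_⟩, hc⟩
  · cases i using Fin.cases <;> cases j using Fin.cases
    · simpa using hy
    · simp [star_dotProduct y, hvy, (Fin.succ_ne_zero _).symm]
    · simp [hvy]
    · simp [hv.dotProduct_eq]
  · cases i using Fin.cases <;> cases j using Fin.cases
    · simp [star_quaternionJ_dotProduct_self]
    · simp [star_quaternionJ_dotProduct y, hJvy]
    · simp [hJvy]
    · simp [hv.quaternionJ_dotProduct_eq_zero]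

lemma exists_eigenframe (hx : x ∈ CompactSp n) {k : ℕ} (hk : k ≤ n) :
    ∃ (v : Fin k → Fin n ⊕ Fin n → ℂ) (μ : Fin k → Circle), QuaternionOrthonormal v ∧
      ∀ i, x.1 *ᵥ v i = (μ i : ℂ) • v i := by
  induction k with
  | zero => exact ⟨Fin.elim0, Fin.elim0, ⟨fun i => i.elim0, fun i => i.elim0⟩, fun i => i.elim0⟩
  | succ k ih =>
    obtain ⟨v, μ, hv, hxv⟩ := ih (by lia)
    obtain ⟨y, hy, c, hc⟩ := exists_cons_eigenframe hx hk hv hxv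
    exact ⟨Fin.cons y v, Fin.cons c μ, hy, Fin.cases hc hxv⟩

theorem exists_conj_torus (hx : x ∈ CompactSp n) :
    ∃ μ, ∃ P ∈ CompactSp n, x = P * torus μ * P⁻¹ := by
  obtain ⟨v, μ, hv, hxv⟩ := exists_eigenframe hx le_rfl
  exact ⟨μ, exists_conj_torus_of_frame hx hv hxv⟩

theorem exists_conj_torus_of_injective (hx : x ∈ CompactSp n) {μ : Fin n → Circle}
    (hμ : Function.Injective (Sum.elim μ μ⁻¹)) (hxμ : ∀ i, ∃ v ≠ 0, x.1 *ᵥ v = (μ i : ℂ) • v) :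
    ∃ P ∈ CompactSp n, x = P * torus μ * P⁻¹ := by
  have hxμ' : ∀ i, ∃ v, star v ⬝ᵥ v = 1 ∧ x.1 *ᵥ v = (μ i : ℂ) • v := fun i => by
    obtain ⟨v, hv0, hv⟩ := hxμ i
    obtain ⟨c, hc⟩ := exists_smul_dotProduct_self_eq_one hv0
    exact ⟨c • v, hc, by rw [mulVec_smul, hv, smul_comm]⟩
  choose v hv hxv using hxμ'
  refine exists_conj_torus_of_frame hx ⟨fun i j => ?_, fun i j => ?_⟩ hxv
  · split_ifs with hij
    · exact hij ▸ hv i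
    · exact star_dotProduct_eq_zero_of_eigenvalues_ne (hxv i) (hxv j)
        fun h => hij (Sum.inl_injective (hμ h))
  · exact star_dotProduct_eq_zero_of_eigenvalues_ne
      (mulVec_quaternionJ_of_eigenvector hx (hxv i)) (hxv j)
      fun h => Sum.inr_ne_inl (hμ h : Sum.inr i = Sum.inl j)

end Diagonalization

/-! ### Factoring through the regular class -/

section UnitaryOfIsometry

variable {m : Type*} [Fintype m] [DecidableEq m]

/-- The unitary matrix of a linear map that preserves the standard Hermitian form. -/
def unitaryOfIsometry (f : (m → ℂ) →ₗ[ℂ] (m → ℂ)) (hf : ∀ u v, star (f u) ⬝ᵥ f v = star u ⬝ᵥ v) :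
    unitaryGroup m ℂ :=
  ⟨f.toMatrix', mem_unitaryGroup_iff'.mpr <| by
    ext i j
    have h := hf (Pi.single i 1) (Pi.single j 1)
    rw [← Pi.single_star] at h
    simpa [one_apply, eq_comm, Pi.single_apply, star_eq_conjTranspose, mul_apply, dotProduct]
      using h⟩

lemma unitaryOfIsometry_mulVec (f : (m → ℂ) →ₗ[ℂ] (m → ℂ))
    (hf : ∀ u v, star (f u) ⬝ᵥ f v = star u ⬝ᵥ v) (v : m → ℂ) :
    (unitaryOfIsometry f hf).1 *ᵥ v = f v :=
  f.toMatrix'_mulVec v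

end UnitaryOfIsometry

section SignedCycle

variable (m : ℕ)

/-- The signed cyclic shift of the `2 (m + 1)` coordinates: it moves each coordinate one place up
within its block and the last coordinate of a block to the first place of the other block, with a
sign in one of the two cases. -/
def signedShift :
    (Fin (m + 1) ⊕ Fin (m + 1) → ℂ) →ₗ[ℂ] (Fin (m + 1) ⊕ Fin (m + 1) → ℂ) where
  toFun v := Sum.elim (vecCons (v (.inr (Fin.last m))) fun j => v (.inl j.castSucc))
    (vecCons (-v (.inl (Fin.last m))) fun j => v (.inr j.castSucc))
  map_add' u v := by ext (k | k) <;> cases k using Fin.cases <;> simp [add_comm]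
  map_smul' c v := by ext (k | k) <;> cases k using Fin.cases <;> simp

variable {m}

lemma star_signedShift_dotProduct_signedShift (u v : Fin (m + 1) ⊕ Fin (m + 1) → ℂ) :
    star (signedShift m u) ⬝ᵥ signedShift m v = star u ⬝ᵥ v := by
  simp only [dotProduct, Fintype.sum_sum_type]
  rw [Fin.sum_univ_succ, Fin.sum_univ_succ, Fin.sum_univ_castSucc, Fin.sum_univ_castSucc]
  simp only [signedShift, LinearMap.coe_mk, AddHom.coe_mk, Pi.star_apply, Sum.elim_inl,
    Sum.elim_inr, cons_val_zero, cons_val_succ, star_neg, neg_mul_neg]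
  ring

variable (m) in
/-- `signedShift` as an element of the unitary group. -/
def signedCycle : unitaryGroup (Fin (m + 1) ⊕ Fin (m + 1)) ℂ :=
  unitaryOfIsometry (signedShift m) star_signedShift_dotProduct_signedShift

lemma signedCycle_mulVec (v : Fin (m + 1) ⊕ Fin (m + 1) → ℂ) :
    (signedCycle m).1 *ᵥ v = signedShift m v :=
  unitaryOfIsometry_mulVec ..

lemma signedCycle_mem_compactSp : signedCycle m ∈ CompactSp (m + 1) :=
  mem_compactSp_iff.mpr fun v => by
    rw [signedCycle_mulVec, signedCycle_mulVec]
    ext (k | k) <;> cases k using Fin.cases <;> simp [signedShift]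

/-- The recursion along the cycle is solved by partial products of the `μ k`; it closes up because
`c ^ (2 * (m + 1)) = -1`. -/
lemma exists_torus_mulVec_eq_smul_signedCycle_mulVec (μ : Fin (m + 1) → Circle) {c : Circle}
    (hc : c ^ (2 * (m + 1)) = -1) :
    ∃ u ≠ 0, (torus μ).1 *ᵥ u = (c : ℂ) • (signedCycle m).1 *ᵥ u := by
  let M (k : Fin (m + 1)) : Circle := Fin.partialProd μ k.succ
  have hM0 : M 0 = μ 0 := by simp [M, Fin.partialProd_succ]
  have hM (j : Fin m) : M j.succ = M j.castSucc * μ j.succ := Fin.partialProd_succ ..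
  let u : Fin (m + 1) ⊕ Fin (m + 1) → Circle :=
    Sum.elim (fun k => c ^ (k : ℕ) * (M k)⁻¹)
      (fun k => -(c ^ (m + 1) * (M (Fin.last m))⁻¹) * (c ^ (k : ℕ) * M k))
  have hinl_zero : (μ 0 : ℂ) * u (.inl 0) = c * u (.inr (Fin.last m)) := by
    have hc' : (c : ℂ) ^ (2 * (m + 1)) = -1 := by
      rw [← Circle.coe_pow, hc, Circle.coe_neg, Circle.coe_one]
    push_cast [u, Sum.elim_inl, Sum.elim_inr, hM0, Fin.val_zero, Fin.val_last]
    field_simp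
    linear_combination hc'
  have hinl_succ (j : Fin m) : (μ j.succ : ℂ) * u (.inl j.succ) = c * u (.inl j.castSucc) := by
    push_cast [u, Sum.elim_inl, hM, Fin.val_succ, Fin.val_castSucc]
    field_simp
    ring
  have hinr_zero : (μ 0 : ℂ)⁻¹ * u (.inr 0) = c * -u (.inl (Fin.last m)) := by
    push_cast [u, Sum.elim_inl, Sum.elim_inr, hM0, Fin.val_zero, Fin.val_last]
    field_simp
    ring
  have hinr_succ (j : Fin m) : (μ j.succ : ℂ)⁻¹ * u (.inr j.succ) = c * u (.inr j.castSucc) := by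
    push_cast [u, Sum.elim_inr, hM, Fin.val_succ, Fin.val_castSucc]
    field_simp
    ring
  refine ⟨fun p => u p, fun h => Circle.coe_ne_zero _ (congrFun h (.inl 0)), ?_⟩
  rw [torus_mulVec, signedCycle_mulVec]
  ext (k | k) <;> cases k using Fin.cases <;>
    simp [signedShift, hinl_zero, hinl_succ, hinr_zero, hinr_succ]

end SignedCycle

section PrincipalElement

/-- The first eigenvalue `e^{iπ/2n}` of the principal element of `Sp(n)`. -/
noncomputable def principalRoot (n : ℕ) : Circle := Circle.exp (Real.pi / (2 * n))

/-- The principal element of `Sp(n)`: its eigenvalues are the `2n` solutions of `z ^ (2 * n) = -1`,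
each with multiplicity one. -/
noncomputable def principalElement (n : ℕ) : unitaryGroup (Fin n ⊕ Fin n) ℂ :=
  torus fun k => principalRoot n ^ (2 * (k : ℕ) + 1)

variable {n : ℕ}

lemma isPrimitiveRoot_principalRoot (hn : 0 < n) :
    IsPrimitiveRoot (principalRoot n) (4 * n) := by
  refine IsPrimitiveRoot.of_map_of_injective (f := Circle.coeHom) ?_ Circle.coe_injective
  have h : (principalRoot n : ℂ) = Complex.exp (2 * Real.pi * Complex.I / (4 * n : ℕ)) := by
    rw [principalRoot, Circle.coe_exp]
    congr 1
    push_cast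
    field_simp
    norm_num
  change IsPrimitiveRoot (principalRoot n : ℂ) (4 * n)
  rw [h]
  exact Complex.isPrimitiveRoot_exp (4 * n) (by lia)

lemma principalRoot_pow_two_mul (hn : 0 < n) : principalRoot n ^ (2 * n) = -1 := by
  rw [principalRoot, ← Circle.exp_natCast_mul]
  ext
  rw [Circle.coe_exp, Circle.coe_neg, Circle.coe_one, ← Complex.exp_pi_mul_I]
  congr 2
  push_cast
  field_simp [hn.ne']

lemma principalRoot_odd_pow_two_mul (hn : 0 < n) (k : ℕ) :
    (principalRoot n ^ (2 * k + 1)) ^ (2 * n) = -1 := by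
  rw [pow_right_comm, principalRoot_pow_two_mul hn, Odd.neg_one_pow (odd_two_mul_add_one k)]

lemma injective_principalElement_eigenvalues :
    Function.Injective (Sum.elim (fun k : Fin n => principalRoot n ^ (2 * (k : ℕ) + 1))
      (fun k : Fin n => principalRoot n ^ (2 * (k : ℕ) + 1))⁻¹) := by
  have hζ (k : Fin n) : IsPrimitiveRoot (principalRoot n) (4 * n) :=
    isPrimitiveRoot_principalRoot k.pos
  have hodd : Function.Injective fun k : Fin n => principalRoot n ^ (2 * (k : ℕ) + 1) :=
    fun i j hij => Fin.ext <| by have := (hζ i).pow_inj (by lia) (by lia) hij; lia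
  refine hodd.sumElim (inv_injective.comp hodd) fun i j hij => ?_
  rw [Pi.inv_apply, eq_inv_iff_mul_eq_one, ← pow_add] at hij
  exact (hζ i).pow_ne_one_of_pos_of_lt (by lia) (by lia) hij

lemma exists_conj_principalElement {x : unitaryGroup (Fin n ⊕ Fin n) ℂ} (hx : x ∈ CompactSp n)
    (hev : ∀ c : Circle, c ^ (2 * n) = -1 → ∃ v ≠ 0, x.1 *ᵥ v = (c : ℂ) • v) :
    ∃ P ∈ CompactSp n, x = P * principalElement n * P⁻¹ :=
  exists_conj_torus_of_injective hx injective_principalElement_eigenvalues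
    fun k => hev _ (principalRoot_odd_pow_two_mul k.pos k)

lemma exists_conj_principalElement_signedCycle_inv_mul_torus {m : ℕ}
    (μ : Fin (m + 1) → Circle) : ∃ P ∈ CompactSp (m + 1),
      (signedCycle m)⁻¹ * torus μ = P * principalElement (m + 1) * P⁻¹ := by
  refine exists_conj_principalElement ((compactSpSubgroup (m + 1)).mul_mem
    ((compactSpSubgroup (m + 1)).inv_mem signedCycle_mem_compactSp) (torus_mem_compactSp μ))
    fun c hc => ?_
  obtain ⟨u, hu0, hu⟩ := exists_torus_mulVec_eq_smul_signedCycle_mulVec μ hc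
  refine ⟨u, hu0, ?_⟩
  rw [UnitaryGroup.mul_val, ← mulVec_mulVec, hu, mulVec_smul, mulVec_mulVec,
    UnitaryGroup.inv_val, UnitaryGroup.star_mul_self, one_mulVec]

lemma exists_conj_principalElement_signedCycle (m : ℕ) :
    ∃ P ∈ CompactSp (m + 1), signedCycle m = P * principalElement (m + 1) * P⁻¹ := by
  refine exists_conj_principalElement signedCycle_mem_compactSp fun c hc => ?_
  obtain ⟨u, hu0, hu⟩ := exists_torus_mulVec_eq_smul_signedCycle_mulVec 1 (c := c⁻¹)
    (by rw [inv_pow, hc, inv_neg, inv_one])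
  refine ⟨u, hu0, ?_⟩
  rw [map_one, UnitaryGroup.one_val, one_mulVec] at hu
  nth_rw 2 [hu]
  simp [smul_smul]

theorem exists_eq_conj_principalElement_mul_conj_principalElement (hn : 0 < n)
    {x : unitaryGroup (Fin n ⊕ Fin n) ℂ} (hx : x ∈ CompactSp n) :
    ∃ P ∈ CompactSp n, ∃ Q ∈ CompactSp n,
      x = (P * principalElement n * P⁻¹) * (Q * principalElement n * Q⁻¹) := by
  obtain ⟨m, rfl⟩ := Nat.exists_eq_succ_of_ne_zero hn.ne'
  obtain ⟨μ, R, hR, rfl⟩ := exists_conj_torus hx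
  obtain ⟨P, hP, hcP⟩ := exists_conj_principalElement_signedCycle m
  obtain ⟨Q, hQ, hcQ⟩ := exists_conj_principalElement_signedCycle_inv_mul_torus μ
  refine ⟨R * P, (compactSpSubgroup _).mul_mem hR hP,
    R * Q, (compactSpSubgroup _).mul_mem hR hQ, ?_⟩
  calc R * torus μ * R⁻¹ = R * (signedCycle m * ((signedCycle m)⁻¹ * torus μ)) * R⁻¹ := by group
    _ = R * ((P * principalElement (m + 1) * P⁻¹) *
          (Q * principalElement (m + 1) * Q⁻¹)) * R⁻¹ := by
      rw [hcQ, ← hcP]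
    _ = _ := by group

end PrincipalElement

/-! ### Symmetric powers of the standard representation of `Sp(1)` -/

open scoped ComplexOrder in
lemma exists_unitary_mulVec_eq {α m : Type*} [Fintype m] [DecidableEq m] {a b : α → m → ℂ}
    (hspan : Submodule.span ℂ (Set.range a) = ⊤)
    (hgram : ∀ s t, star (b s) ⬝ᵥ b t = star (a s) ⬝ᵥ a t) :
    ∃ U : unitaryGroup m ℂ, ∀ s, U.1 *ᵥ a s = b s := by
  set A := Finsupp.linearCombination ℂ a
  set B := Finsupp.linearCombination ℂ b
  have hAB (f g : α →₀ ℂ) : star (B f) ⬝ᵥ B g = star (A f) ⬝ᵥ A g := by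
    simp [A, B, Finsupp.linearCombination_apply, Finsupp.sum, star_sum, sum_dotProduct,
      dotProduct_sum, hgram]
  obtain ⟨R, hR⟩ := A.exists_rightInverse_of_surjective (by
    rw [Finsupp.range_linearCombination, hspan])
  have hAR (v : m → ℂ) : A (R v) = v := LinearMap.congr_fun hR v
  refine ⟨unitaryOfIsometry (B ∘ₗ R) fun u v => ?_, fun s => ?_⟩
  · rw [LinearMap.comp_apply, LinearMap.comp_apply, hAB, hAR, hAR]
  · have hA : A (R (a s) - Finsupp.single s 1) = 0 := by simp [hAR, A]
    have hB : B (R (a s) - Finsupp.single s 1) = 0 := by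
      rw [← dotProduct_star_self_eq_zero, hAB, hA, dotProduct_zero]
    rw [unitaryOfIsometry_mulVec, LinearMap.comp_apply, ← sub_eq_zero, ← hB]
    simp [B]

section Veronese

variable (m : ℕ)

/-- The exponent of the first variable in the monomial of degree `2m + 1` attached to a coordinate
of `ℂ^(m+1) ⊕ ℂ^(m+1)`: it is `m + 1 + k` at `inl k` and `m - k` at `inr k`, so that swapping the
blocks swaps the exponents of the two variables. -/
def veroneseExponent : Fin (m + 1) ⊕ Fin (m + 1) ≃ Fin ((m + 1) + (m + 1)) :=
  (Equiv.sumComm _ _).trans ((Equiv.sumCongr Fin.revPerm (.refl _)).trans finSumFinEquiv)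

variable {m}

lemma veroneseExponent_inl (k : Fin (m + 1)) : (veroneseExponent m (.inl k) : ℕ) = m + 1 + k := by
  simp [veroneseExponent, add_comm]

lemma veroneseExponent_inr (k : Fin (m + 1)) : (veroneseExponent m (.inr k) : ℕ) = m - k := by
  simp [veroneseExponent]

lemma veroneseExponent_swap (p : Fin (m + 1) ⊕ Fin (m + 1)) :
    (veroneseExponent m p.swap : ℕ) = 2 * m + 1 - veroneseExponent m p := by
  rcases p with k | k <;>
    simp only [Sum.swap_inl, Sum.swap_inr, veroneseExponent_inl, veroneseExponent_inr] <;> lia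

variable (m)

/-- The normalization of the monomials: square roots of binomial coefficients make `veronese`
compatible with the Hermitian forms, and the signs make it commute with `quaternionJ`. -/
noncomputable def veroneseCoeff (p : Fin (m + 1) ⊕ Fin (m + 1)) : ℝ :=
  Sum.elim (fun _ => 1) (fun k : Fin (m + 1) => (-1) ^ (m - (k : ℕ))) p *
    √((2 * m + 1).choose (veroneseExponent m p))

/-- The Veronese map `v ↦ v ^ (2m + 1)` from `ℂ²` to its symmetric power of degree `2m + 1`,
written in an orthonormal basis of monomials. -/
noncomputable def veronese (v : Fin 1 ⊕ Fin 1 → ℂ) : Fin (m + 1) ⊕ Fin (m + 1) → ℂ := fun p =>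
  veroneseCoeff m p *
    (v (.inl 0) ^ (veroneseExponent m p : ℕ) * v (.inr 0) ^ (veroneseExponent m p.swap : ℕ))

variable {m}

lemma veroneseCoeff_mul_self (p : Fin (m + 1) ⊕ Fin (m + 1)) :
    veroneseCoeff m p * veroneseCoeff m p = (2 * m + 1).choose (veroneseExponent m p) := by
  rw [veroneseCoeff, mul_mul_mul_comm, Real.mul_self_sqrt (by positivity)]
  rcases p with k | k <;> simp [← mul_pow]

lemma veroneseCoeff_ne_zero (p : Fin (m + 1) ⊕ Fin (m + 1)) : veroneseCoeff m p ≠ 0 := by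
  have h : (2 * m + 1).choose (veroneseExponent m p) ≠ 0 := (Nat.choose_pos (by lia)).ne'
  rw [← mul_self_ne_zero, veroneseCoeff_mul_self]
  exact mod_cast h

lemma veroneseCoeff_inr (k : Fin (m + 1)) :
    veroneseCoeff m (.inr k) = (-1) ^ (m - (k : ℕ)) * veroneseCoeff m (.inl k) := by
  have h : (2 * m + 1).choose (m - k) = (2 * m + 1).choose (m + 1 + k) :=
    Nat.choose_symm_of_eq_add (by lia)
  simp [veroneseCoeff, veroneseExponent_inl, veroneseExponent_inr, h]

lemma star_veronese_dotProduct_veronese (u v : Fin 1 ⊕ Fin 1 → ℂ) :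
    star (veronese m u) ⬝ᵥ veronese m v = (star u ⬝ᵥ v) ^ (2 * m + 1) := by
  have huv : star u ⬝ᵥ v =
      star (u (.inl 0)) * v (.inl 0) + star (u (.inr 0)) * v (.inr 0) := by simp [dotProduct]
  rw [huv, add_pow, show 2 * m + 1 + 1 = (m + 1) + (m + 1) by lia, ← Fin.sum_univ_eq_sum_range,
    ← (veroneseExponent m).sum_comp]
  refine Finset.sum_congr rfl fun p _ => ?_
  have hc : ((2 * m + 1).choose (veroneseExponent m p) : ℂ) =
      veroneseCoeff m p * veroneseCoeff m p := mod_cast (veroneseCoeff_mul_self p).symm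
  simp only [veronese, ← veroneseExponent_swap, Pi.star_apply, star_mul', star_pow, hc,
    Complex.star_def, Complex.conj_ofReal]
  ring

lemma veronese_quaternionJ (v : Fin 1 ⊕ Fin 1 → ℂ) :
    veronese m (quaternionJ v) = quaternionJ (veronese m v) := by
  ext (k | k)
  · have hsign : (-1 : ℂ) ^ (m + 1 + (k : ℕ)) = -(-1) ^ (m - (k : ℕ)) := by
      rw [show m + 1 + (k : ℕ) = (m - k) + 2 * k + 1 by lia, pow_succ, pow_add, pow_mul]
      simp
    simp only [veronese, quaternionJ_apply_inl, quaternionJ_apply_inr, Sum.swap_inl, Sum.swap_inr,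
      neg_pow (starRingEnd ℂ _), hsign, veroneseCoeff_inr, veroneseExponent_inl,
      veroneseExponent_inr, Complex.star_def, map_mul, map_pow, map_neg, map_one,
      Complex.conj_ofReal, Complex.ofReal_mul, Complex.ofReal_pow, Complex.ofReal_neg,
      Complex.ofReal_one]
    ring
  · have hsign : (-1 : ℂ) ^ (m - (k : ℕ)) * (-1) ^ (m - (k : ℕ)) = 1 := by simp [← mul_pow]
    simp only [veronese, quaternionJ_apply_inl, quaternionJ_apply_inr, Sum.swap_inl, Sum.swap_inr,
      neg_pow (starRingEnd ℂ _), veroneseCoeff_inr, veroneseExponent_inl, veroneseExponent_inr,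
      Complex.star_def, map_mul, map_pow, Complex.conj_ofReal, Complex.ofReal_mul,
      Complex.ofReal_pow, Complex.ofReal_neg, Complex.ofReal_one]
    linear_combination
      (veroneseCoeff m (.inl k) * starRingEnd ℂ (v (.inl 0)) ^ (m + 1 + (k : ℕ))
        * starRingEnd ℂ (v (.inr 0)) ^ (m - (k : ℕ))) * hsign

lemma span_range_veronese : Submodule.span ℂ (Set.range (veronese m)) = ⊤ := by
  by_contra hspan
  obtain ⟨f, hf0, hf⟩ := Submodule.exists_le_ker_of_lt_top _ (lt_top_iff_ne_top.mpr hspan)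
  set c : Fin (m + 1) ⊕ Fin (m + 1) → ℂ := fun p => f fun q => if p = q then 1 else 0
  have hfc (x) : f x = ∑ p, x p * c p := f.pi_apply_eq_sum_univ x
  set e := veroneseExponent m
  have hvandermonde : (fun i => (veroneseCoeff m (e.symm i) : ℂ) * c (e.symm i)) = 0 := by
    refine eq_zero_of_forall_index_sum_pow_mul_eq_zero
      (f := fun j : Fin ((m + 1) + (m + 1)) => ((j : ℕ) : ℂ))
      (Nat.cast_injective.comp Fin.val_injective) fun j => ?_
    have h : f (veronese m (Sum.elim (fun _ => (j : ℕ)) 1)) = 0 :=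
      hf (Submodule.subset_span ⟨_, rfl⟩)
    rw [← e.sum_comp, ← h, hfc]
    refine Finset.sum_congr rfl fun p _ => ?_
    simp only [veronese, e, Equiv.symm_apply_apply, Sum.elim_inl, Sum.elim_inr, Pi.one_apply,
      one_pow]
    ring
  have hc (p) : c p = 0 := by
    simpa [veroneseCoeff_ne_zero] using congrFun hvandermonde (e p)
  exact hf0 (LinearMap.ext fun x => by simp [hfc, hc])

lemma ext_of_mulVec_veronese
    {A B : Matrix (Fin (m + 1) ⊕ Fin (m + 1)) (Fin (m + 1) ⊕ Fin (m + 1)) ℂ}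
    (h : ∀ v, A *ᵥ veronese m v = B *ᵥ veronese m v) : A = B :=
  toLin'.injective <| LinearMap.ext_on_range span_range_veronese h

lemma exists_unitary_mulVec_veronese (g : unitaryGroup (Fin 1 ⊕ Fin 1) ℂ) :
    ∃ U : unitaryGroup (Fin (m + 1) ⊕ Fin (m + 1)) ℂ,
      ∀ v, U.1 *ᵥ veronese m v = veronese m (g.1 *ᵥ v) :=
  exists_unitary_mulVec_eq span_range_veronese fun u v => by
    rw [star_veronese_dotProduct_veronese, star_veronese_dotProduct_veronese,
      star_mulVec_dotProduct_mulVec]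

variable (m) in
/-- The symmetric power of degree `2m + 1` of the standard representation of `U(2)`. -/
noncomputable def symPower :
    unitaryGroup (Fin 1 ⊕ Fin 1) ℂ →* unitaryGroup (Fin (m + 1) ⊕ Fin (m + 1)) ℂ :=
  MonoidHom.mk' (fun g => (exists_unitary_mulVec_veronese g).choose) fun g h => by
    have hspec (g) := (exists_unitary_mulVec_veronese (m := m) g).choose_spec
    refine Subtype.ext (ext_of_mulVec_veronese fun v => ?_)
    rw [hspec, UnitaryGroup.mul_val, UnitaryGroup.mul_val, ← mulVec_mulVec, ← mulVec_mulVec, hspec,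
      hspec]

lemma symPower_mulVec_veronese (g : unitaryGroup (Fin 1 ⊕ Fin 1) ℂ) (v : Fin 1 ⊕ Fin 1 → ℂ) :
    (symPower m g).1 *ᵥ veronese m v = veronese m (g.1 *ᵥ v) :=
  (exists_unitary_mulVec_veronese g).choose_spec v

lemma symPower_mem_compactSp {g : unitaryGroup (Fin 1 ⊕ Fin 1) ℂ} (hg : g ∈ CompactSp 1) :
    symPower m g ∈ CompactSp (m + 1) := by
  set U := (symPower m g).1.mulVecLin
  have h : U.comp quaternionJ = quaternionJ.comp U :=
    LinearMap.ext_on_range span_range_veronese fun v => by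
      simp only [U, LinearMap.comp_apply, mulVecLin_apply]
      rw [← veronese_quaternionJ, symPower_mulVec_veronese, mem_compactSp_iff.mp hg,
        veronese_quaternionJ, symPower_mulVec_veronese]
  exact mem_compactSp_iff.mpr (LinearMap.congr_fun h)

lemma symPower_torus (z : Circle) :
    symPower m (torus fun _ => z) = torus fun k : Fin (m + 1) => z ^ (2 * (k : ℕ) + 1) := by
  refine Subtype.ext (ext_of_mulVec_veronese fun v => ?_)
  rw [symPower_mulVec_veronese, torus_mulVec, torus_mulVec]
  ext (k | k)
  all_goals
    have hz : (z : ℂ) ^ (m + 1 + (k : ℕ)) = z ^ (2 * (k : ℕ) + 1) * z ^ (m - (k : ℕ)) := by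
      rw [← pow_add]; congr 1; lia
    simp only [veronese, mul_pow, veroneseExponent_inl, veroneseExponent_inr, hz, Sum.swap_inl,
      Sum.swap_inr, Sum.elim_inl, Sum.elim_inr, Pi.inv_apply, Circle.coe_inv, Circle.coe_pow,
      inv_pow]
    field_simp

lemma symPower_torus_principalRoot :
    symPower m (torus fun _ => principalRoot (m + 1)) = principalElement (m + 1) :=
  symPower_torus _

end Veronese

/-! ### Nontrivial words on `Sp(1)` -/

lemma exists_prod_map_vecMulVec_eq {K α ι : Type*} [Field K] [Fintype ι] [DecidableEq ι]
    {a b : α → ι → K} (hb : ∀ x, b x ≠ 0) {x : α} {L : List α}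
    (hL : (x :: L).IsChain fun x y => b x ⬝ᵥ a y ≠ 0) :
    ∃ u ≠ 0, ((x :: L).map fun y => vecMulVec (a y) (b y)).prod = vecMulVec (a x) u := by
  induction L generalizing x with
  | nil => exact ⟨b x, hb x, by simp⟩
  | cons y L ih =>
    obtain ⟨hxy, hL⟩ := List.isChain_cons_cons.mp hL
    obtain ⟨u, hu, hprod⟩ := ih hL
    refine ⟨(b x ⬝ᵥ a y) • u, smul_ne_zero hxy hu, ?_⟩
    rw [List.map_cons, List.prod_cons, hprod, vecMulVec_mul_vecMulVec]

lemma polynomial_matrix_eq_of_infinite_eval_scalar_eq {K ι : Type*} [Field K] [Fintype ι]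
    [DecidableEq ι] {P Q : Polynomial (Matrix ι ι K)} {s : Set K} (hs : s.Infinite)
    (h : ∀ z ∈ s, P.eval (scalar ι z) = Q.eval (scalar ι z)) : P = Q := by
  refine matPolyEquiv.symm.injective ?_
  ext1 i j
  refine Polynomial.eq_of_infinite_eval_eq _ _ (hs.mono fun z hz => ?_)
  have hz' := h z hz
  rw [← matPolyEquiv_symm_map_eval, ← matPolyEquiv_symm_map_eval] at hz'
  exact congrFun₂ hz' i j

lemma exists_mem_prod_map_sq_smul_add_ne {K α ι : Type*} [Field K] [Fintype ι] [DecidableEq ι]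
    {s : Set K} (hs : s.Infinite) {A : α → Matrix ι ι K} (B : α → Matrix ι ι K) {L : List α}
    (hL : L ≠ []) (hA : (L.map A).prod ≠ 0) :
    ∃ z ∈ s, (L.map fun x => z ^ 2 • A x + B x).prod ≠ z ^ L.length • 1 := by
  by_contra! h
  let F (x : α) : Polynomial (Matrix ι ι K) := .C (A x) * .X ^ 2 + .C (B x)
  have hF : (L.map F).prod = .X ^ L.length := by
    refine polynomial_matrix_eq_of_infinite_eval_scalar_eq hs fun z hz => ?_
    let evalScalar := Polynomial.eval₂RingHom' (RingHom.id (Matrix ι ι K)) (scalar ι z)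
      fun M => (scalar_commute z (Commute.all z) M).symm
    calc evalScalar (L.map F).prod = (L.map fun x => z ^ 2 • A x + B x).prod := by
          rw [map_list_prod, List.map_map]
          congr! 3 with x
          simp [evalScalar, F, smul_eq_mul_diagonal, diagonal_pow, Pi.pow_def]
      _ = evalScalar (.X ^ L.length) := by
          rw [h z hz]
          simp [evalScalar, smul_one_eq_diagonal, diagonal_pow, Pi.pow_def]
  have hcoeff : (L.map F).prod.coeff (L.length * 2) = (L.map A).prod := by
    rw [← L.length_map F, Polynomial.coeff_list_prod_of_natDegree_le _ 2, List.map_map]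
    · congr! 2
      ext1 x
      simp [F]
    · simp only [List.mem_map, forall_exists_index, and_imp, forall_apply_eq_imp_iff₂, F]
      intro x _
      compute_degree
  have hlen : L.length * 2 ≠ L.length := by have := List.length_pos_iff.mpr hL; lia
  rw [hF, Polynomial.coeff_X_pow, if_neg hlen] at hcoeff
  exact hA hcoeff.symm

lemma exists_circle_prod_map_smul_add_inv_smul_ne_one {α ι : Type*} [Fintype ι] [DecidableEq ι]
    {A : α → Matrix ι ι ℂ} (B : α → Matrix ι ι ℂ) {L : List α} (hL : L ≠ [])
    (hA : (L.map A).prod ≠ 0) :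
    ∃ z : Circle, (L.map fun x => (z : ℂ) • A x + (z : ℂ)⁻¹ • B x).prod ≠ 1 := by
  have hinf : Infinite Circle := Set.infinite_univ_iff.mp <|
    isPreconnected_univ.infinite_of_nontrivial
      ⟨1, trivial, -1, trivial, (Circle.neg_ne_self 1).symm⟩
  obtain ⟨_, ⟨z, rfl⟩, hz⟩ := exists_mem_prod_map_sq_smul_add_ne
    (Set.infinite_range_of_injective (α := Circle) Subtype.coe_injective) B hL hA
  refine ⟨z, fun h => hz ?_⟩
  have hfactor (x : α) :
      (z : ℂ) ^ 2 • A x + B x = (z : ℂ) • ((z : ℂ) • A x + (z : ℂ)⁻¹ • B x) := by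
    rw [smul_add, smul_smul, smul_smul, ← sq, mul_inv_cancel₀ z.coe_ne_zero, one_smul]
  rw [← h, ← L.length_map fun x => (z : ℂ) • A x + (z : ℂ)⁻¹ • B x, List.smul_prod, List.map_map]
  congr! 2
  exact funext hfactor

section AxisRotation

/-- The unit vector `(cos θ, sin θ)` of `ℂ²`. -/
noncomputable def direction (θ : ℝ) : Fin 1 ⊕ Fin 1 → ℂ :=
  Sum.elim (fun _ => (Real.cos θ : ℂ)) fun _ => (Real.sin θ : ℂ)

lemma direction_dotProduct_direction (θ φ : ℝ) :
    direction θ ⬝ᵥ direction φ = (Real.cos (θ - φ) : ℂ) := by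
  simp [direction, dotProduct, Real.cos_sub]

lemma direction_ne_zero (θ : ℝ) : direction θ ≠ 0 := fun h => by
  simpa [h] using direction_dotProduct_direction θ θ

lemma star_direction (θ : ℝ) : star (direction θ) = direction θ := by
  ext (_ | _) <;> exact Complex.conj_ofReal _

lemma quaternionJ_direction (θ : ℝ) :
    quaternionJ (direction θ) = direction (θ + Real.pi / 2) := by
  ext (i | i)
  · rw [quaternionJ_apply_inl, ← Pi.star_apply, star_direction]
    simp [direction, Complex.cos_add_pi_div_two]
  · rw [quaternionJ_apply_inr, ← Pi.star_apply, star_direction]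
    simp [direction, Complex.sin_add_pi_div_two]

lemma quaternionOrthonormal_direction (θ : ℝ) :
    QuaternionOrthonormal fun _ : Fin 1 => direction θ where
  dotProduct_eq i j := by
    rw [star_direction, direction_dotProduct_direction, if_pos (Subsingleton.elim i j)]
    simp
  quaternionJ_dotProduct_eq_zero _ _ := star_quaternionJ_dotProduct_self _

/-- The one-parameter subgroup of `Sp(1)` acting as `z` on `direction θ` and as `z⁻¹` on its
orthogonal complement. -/
noncomputable def axisRotation (θ : ℝ) : Circle →* unitaryGroup (Fin 1 ⊕ Fin 1) ℂ :=
  (MulAut.conj (quaternionOrthonormal_direction θ).frameUnitary).toMonoidHom.comp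
    (torus.comp (Pi.constMonoidHom (Fin 1) Circle))

lemma axisRotation_mem_compactSp (θ : ℝ) (z : Circle) : axisRotation θ z ∈ CompactSp 1 :=
  have hP := (quaternionOrthonormal_direction θ).frameUnitary_mem_compactSp
  (compactSpSubgroup 1).mul_mem ((compactSpSubgroup 1).mul_mem hP (torus_mem_compactSp _))
    ((compactSpSubgroup 1).inv_mem hP)

/-- The orthogonal projection onto the line spanned by `direction θ`. -/
noncomputable def axisProjection (θ : ℝ) : Matrix (Fin 1 ⊕ Fin 1) (Fin 1 ⊕ Fin 1) ℂ :=
  vecMulVec (direction θ) (direction θ)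

lemma axisProjection_add_pi (θ : ℝ) : axisProjection (θ + Real.pi) = axisProjection θ := by
  ext (i | i) (j | j) <;> simp [axisProjection, direction, vecMulVec_apply]

lemma coe_axisRotation (θ : ℝ) (z : Circle) :
    (axisRotation θ z).1 =
      (z : ℂ) • axisProjection θ + (z : ℂ)⁻¹ • axisProjection (θ + Real.pi / 2) := by
  set F := frameMatrix fun _ : Fin 1 => direction θ
  have hF (p) : F p (.inl 0) = direction θ p ∧ F p (.inr 0) = direction (θ + Real.pi / 2) p :=
    ⟨rfl, congrFun (quaternionJ_direction θ) p⟩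
  have hstar (φ p) : star (direction φ p) = direction φ p := congrFun (star_direction φ) p
  have h : (axisRotation θ z).1 = F * (torus fun _ => z).1 * Fᴴ := rfl
  ext p q
  rw [h, coe_torus, mul_apply, Fintype.sum_sum_type]
  simp only [mul_diagonal, conjTranspose_apply, Finset.univ_unique, Finset.sum_singleton,
    Fin.default_eq_zero, hF, hstar, Sum.elim_inl, Sum.elim_inr, Pi.inv_apply, Circle.coe_inv,
    axisProjection, Matrix.add_apply, Matrix.smul_apply, vecMulVec_apply, smul_eq_mul]
  ring

lemma coe_axisRotation_inv (θ : ℝ) (z : Circle) :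
    (axisRotation θ z)⁻¹.1 =
      (z : ℂ) • axisProjection (θ + Real.pi / 2) + (z : ℂ)⁻¹ • axisProjection θ := by
  rw [← map_inv, coe_axisRotation, Circle.coe_inv, inv_inv, add_comm]

variable {α : Type*} (θ : α → ℝ)

/-- The direction expanded by `axisRotation (θ i) z` or its inverse, for the letter `(i, true)` or
`(i, false)` of a word. -/
noncomputable def letterAngle (x : α × Bool) : ℝ := cond x.2 (θ x.1) (θ x.1 + Real.pi / 2)

lemma coe_letter_axisRotation (x : α × Bool) (z : Circle) :
    (cond x.2 (axisRotation (θ x.1) z) (axisRotation (θ x.1) z)⁻¹).1 =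
      (z : ℂ) • axisProjection (letterAngle θ x) +
        (z : ℂ)⁻¹ • axisProjection (letterAngle θ x + Real.pi / 2) := by
  rcases x with ⟨i, _ | _⟩
  · rw [cond_false, coe_axisRotation_inv, letterAngle, cond_false, add_assoc, add_halves,
      axisProjection_add_pi]
  · exact coe_axisRotation _ _

variable {θ}

lemma cos_letterAngle_sub_ne_zero (hinj : Function.Injective θ)
    (hθ : ∀ i, θ i ∈ Set.Ico 0 (Real.pi / 2)) {x y : α × Bool} (hxy : x.1 = y.1 → x.2 = y.2) :
    Real.cos (letterAngle θ x - letterAngle θ y) ≠ 0 := by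
  obtain ⟨⟨i, b⟩, ⟨j, c⟩⟩ := x, y
  obtain ⟨⟨hi0, hi⟩, ⟨hj0, hj⟩⟩ := hθ i, hθ j
  by_cases hbc : b = c
  · have h : letterAngle θ (i, b) - letterAngle θ (j, c) = θ i - θ j := by
      cases hbc; cases b <;> simp [letterAngle]
    rw [h]
    exact (Real.cos_pos_of_mem_Ioo ⟨by linarith, by linarith⟩).ne'
  · have hsin : Real.sin (θ i - θ j) ≠ 0 := by
      rw [Ne, Real.sin_eq_zero_iff_of_lt_of_lt (by linarith) (by linarith), sub_eq_zero]
      exact fun h => hbc (hxy (hinj h))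
    cases b <;> cases c
    · exact absurd rfl hbc
    · have h : letterAngle θ (i, false) - letterAngle θ (j, true) = θ i - θ j + Real.pi / 2 :=
        add_sub_right_comm _ _ _
      rwa [h, Real.cos_add_pi_div_two, neg_ne_zero]
    · have h : letterAngle θ (i, true) - letterAngle θ (j, false) = θ i - θ j - Real.pi / 2 :=
        (sub_sub _ _ _).symm
      rwa [h, Real.cos_sub_pi_div_two]
    · exact absurd rfl hbc

lemma exists_lift_axisRotation_ne_one (hinj : Function.Injective θ)
    (hθ : ∀ i, θ i ∈ Set.Ico 0 (Real.pi / 2)) {w : FreeGroup α} (hw : w ≠ 1) :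
    ∃ z : Circle, FreeGroup.lift (fun i => axisRotation (θ i) z) w ≠ 1 := by
  classical
  have hne : w.toWord ≠ [] := mt FreeGroup.toWord_eq_nil_iff.mp hw
  have hprod : (w.toWord.map fun x => axisProjection (letterAngle θ x)).prod ≠ 0 := by
    obtain ⟨x, L, hxL⟩ := List.exists_cons_of_ne_nil hne
    have hchain : (x :: L).IsChain fun x y =>
        direction (letterAngle θ x) ⬝ᵥ direction (letterAngle θ y) ≠ 0 := by
      rw [← hxL]
      refine List.IsChain.imp (fun x y hxy => ?_) (FreeGroup.isReduced_toWord (x := w))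
      rw [direction_dotProduct_direction]
      exact mod_cast cos_letterAngle_sub_ne_zero hinj hθ hxy
    obtain ⟨u, hu, h⟩ := exists_prod_map_vecMulVec_eq (fun _ => direction_ne_zero _) hchain
    rw [hxL]
    exact h.trans_ne (vecMulVec_ne_zero (direction_ne_zero _) hu)
  obtain ⟨z, hz⟩ := exists_circle_prod_map_smul_add_inv_smul_ne_one
    (fun x => axisProjection (letterAngle θ x + Real.pi / 2)) hne hprod
  refine ⟨z, fun h => hz ?_⟩
  rw [← FreeGroup.mk_toWord (x := w), FreeGroup.lift_mk] at h
  have hcoe := congrArg (unitaryGroup (Fin 1 ⊕ Fin 1) ℂ).subtype h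
  rw [map_list_prod, List.map_map, map_one] at hcoe
  simp only [← coe_letter_axisRotation]
  exact hcoe

end AxisRotation

/-! ### Word values near the identity of the maximal torus of `Sp(1)` -/

lemma re_trace_conj_torus (P : unitaryGroup (Fin 1 ⊕ Fin 1) ℂ) (μ : Fin 1 → Circle) :
    (P * torus μ * P⁻¹).1.trace.re = 2 * (μ 0 : ℂ).re := by
  have h : (P * torus μ * P⁻¹).1.trace = (torus μ).1.trace := by
    rw [UnitaryGroup.mul_val, trace_mul_comm, ← UnitaryGroup.mul_val, ← mul_assoc,
      inv_mul_cancel, one_mul]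
  rw [h, coe_torus, trace_diagonal]
  simp [two_mul]

lemma circle_eq_or_eq_inv_of_re_eq {y z : Circle} (h : (y : ℂ).re = (z : ℂ).re) :
    y = z ∨ y = z⁻¹ := by
  have hy := y.normSq_coe
  have hz := z.normSq_coe
  rw [Complex.normSq_apply] at hy hz
  rcases mul_self_eq_mul_self_iff.mp (show (y : ℂ).im * (y : ℂ).im = (z : ℂ).im * (z : ℂ).im by
    rw [h] at hy; linarith) with him | him
  · exact .inl (Circle.ext (Complex.ext h him))
  · refine .inr (Circle.ext (Complex.ext ?_ ?_)) <;> simp [h, him]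

lemma exists_conj_torus_inv (z : Circle) :
    ∃ P ∈ CompactSp 1, torus (fun _ => z⁻¹) = P * torus (fun _ : Fin 1 => z) * P⁻¹ := by
  refine exists_conj_torus_of_frame (torus_mem_compactSp _)
    (v := fun _ => Pi.single (.inr 0) 1) ⟨fun i j => ?_, fun _ _ => ?_⟩ fun _ => ?_
  · simp [Subsingleton.elim i j]
  · exact star_quaternionJ_dotProduct_self _
  · rw [torus_mulVec]
    ext p
    by_cases hp : p = .inr 0 <;> simp [hp]

lemma exists_conj_torus_of_re_trace_eq {x : unitaryGroup (Fin 1 ⊕ Fin 1) ℂ} (hx : x ∈ CompactSp 1)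
    {z : Circle} (hz : x.1.trace.re = 2 * (z : ℂ).re) :
    ∃ P ∈ CompactSp 1, x = P * torus (fun _ => z) * P⁻¹ := by
  obtain ⟨μ, P, hP, rfl⟩ := exists_conj_torus hx
  obtain ⟨y, rfl⟩ : ∃ y, μ = fun _ => y := ⟨μ 0, funext fun i => by rw [Subsingleton.elim i 0]⟩
  rw [re_trace_conj_torus] at hz
  obtain rfl | rfl := circle_eq_or_eq_inv_of_re_eq (mul_left_cancel₀ two_ne_zero hz)
  · exact ⟨P, hP, rfl⟩
  · obtain ⟨Q, hQ, hzQ⟩ := exists_conj_torus_inv z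
    refine ⟨P * Q, (compactSpSubgroup 1).mul_mem hP hQ, ?_⟩
    rw [hzQ]
    group

lemma re_trace_lt_two {x : unitaryGroup (Fin 1 ⊕ Fin 1) ℂ} (hx : x ∈ CompactSp 1) (hx1 : x ≠ 1) :
    x.1.trace.re < 2 := by
  obtain ⟨μ, P, -, rfl⟩ := exists_conj_torus hx
  have hμ : μ 0 ≠ 1 := fun h => hx1 <| by
    rw [show μ = 1 from funext fun i => by rw [Subsingleton.elim i 0, h, Pi.one_apply], map_one,
      mul_one, mul_inv_cancel]
  rw [re_trace_conj_torus]
  refine (mul_lt_iff_lt_one_right two_pos).mpr (lt_of_le_of_ne ?_ fun h => hμ ?_)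
  · exact (Complex.re_le_norm _).trans_eq (μ 0).norm_coe
  · simpa using circle_eq_or_eq_inv_of_re_eq (z := 1) h

lemma continuous_lift_apply {X α G : Type*} [TopologicalSpace X] [Group G] [TopologicalSpace G]
    [IsTopologicalGroup G] {f : X → α → G} (hf : ∀ i, Continuous fun x => f x i)
    (w : FreeGroup α) : Continuous fun x => FreeGroup.lift (f x) w := by
  induction w using FreeGroup.induction_on with
  | C1 => simpa only [map_one] using continuous_const
  | of i => simpa only [FreeGroup.lift_apply_of] using hf i
  | inv_of i h => simpa only [map_inv] using h.fun_inv
  | mul u v hu hv => simpa only [map_mul] using hu.fun_mul hv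

lemma continuous_axisRotation (θ : ℝ) : Continuous (axisRotation θ) := by
  refine continuous_induced_rng.mpr ?_
  simp only [Function.comp_def, coe_axisRotation, ← Circle.coe_inv]
  fun_prop

theorem eventually_torus_mem_wordValuesIn {d : ℕ} {w : FreeGroup (Fin d)} (hw : w ≠ 1) :
    ∀ᶠ z : Circle in 𝓝 1, torus (fun _ : Fin 1 => z) ∈ wordValuesIn w (CompactSp 1) := by
  obtain ⟨z₀, hz₀⟩ := exists_lift_axisRotation_ne_one (θ := fun i : Fin d => Real.arctan (i : ℕ))
    (Real.arctan_injective.comp (Nat.cast_injective.comp Fin.val_injective))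
    (fun i => ⟨Real.arctan_nonneg.mpr (Nat.cast_nonneg _), Real.arctan_lt_pi_div_two _⟩) hw
  set g := fun z : Circle =>
    FreeGroup.lift (fun i : Fin d => axisRotation (Real.arctan (i : ℕ)) z) w
  have hg (z) : g z ∈ wordValuesIn w (CompactSp 1) :=
    ⟨_, fun i => axisRotation_mem_compactSp _ z, rfl⟩
  have hgSp (z) : g z ∈ CompactSp 1 := wordValuesIn_subset w (compactSpSubgroup 1) (hg z)
  have hg1 : g 1 = 1 := (FreeGroup.lift_unique 1 fun i => (map_one _).symm).symm
  have hcont : Continuous fun z => (g z).1.trace.re :=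
    Complex.continuous_re.comp <| Continuous.matrix_trace <| continuous_subtype_val.comp <|
      continuous_lift_apply (fun i => continuous_axisRotation _) w
  have hlt : (g z₀).1.trace.re < 2 * ((1 : Circle) : ℂ).re := by
    simpa using re_trace_lt_two (hgSp z₀) hz₀
  have hnear : ∀ᶠ z : Circle in 𝓝 1, (g z₀).1.trace.re < 2 * (z : ℂ).re :=
    ContinuousAt.eventually_lt continuousAt_const (by fun_prop) hlt
  filter_upwards [hnear] with z hz
  have hle : 2 * (z : ℂ).re ≤ (g 1).1.trace.re := by
    have hre := (Complex.re_le_norm z).trans_eq z.norm_coe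
    simpa [hg1] using hre
  obtain ⟨y, hy⟩ := mem_range_of_exists_le_of_exists_ge hcont ⟨z₀, hz.le⟩ ⟨1, hle⟩
  obtain ⟨P, hP, hgy⟩ := exists_conj_torus_of_re_trace_eq (hgSp y) hy
  have h : torus (fun _ : Fin 1 => z) = P⁻¹ * g y * P⁻¹⁻¹ := by rw [hgy]; group
  rw [h]
  exact conj_mem_wordValuesIn (K := compactSpSubgroup 1) (inv_mem hP) (hg y)

theorem eventually_principalElement_mem_wordValuesIn {d : ℕ} {w : FreeGroup (Fin d)} (hw : w ≠ 1) :
    ∀ᶠ n : ℕ in atTop, principalElement n ∈ wordValuesIn w (CompactSp n) := by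
  have hroot : Tendsto principalRoot atTop (𝓝 1) := by
    have h : Tendsto (fun n : ℕ => Real.pi / (2 * n)) atTop (𝓝 0) :=
      tendsto_const_nhds.div_atTop (tendsto_natCast_atTop_atTop.const_mul_atTop two_pos)
    exact Circle.exp_zero ▸ (Circle.exp.continuous.tendsto 0).comp h
  filter_upwards [hroot.eventually (eventually_torus_mem_wordValuesIn hw), eventually_gt_atTop 0]
    with n hn hn0
  obtain ⟨m, rfl⟩ := Nat.exists_eq_succ_of_ne_zero hn0.ne'
  rw [← symPower_torus_principalRoot]
  exact map_mem_wordValuesIn (symPower m) (fun _ => symPower_mem_compactSp) hn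

/-- For all nontrivial words `w₁, w₂`, there is `N` such that for all `n ≥ N`,
`Sp(n) = w₁(Sp(n)) · w₂(Sp(n))`. -/
theorem sp_waring_two {d₁ d₂ : ℕ} (w₁ : FreeGroup (Fin d₁)) (w₂ : FreeGroup (Fin d₂))
    (hw₁ : w₁ ≠ 1) (hw₂ : w₂ ≠ 1) :
    ∃ N : ℕ, ∀ n : ℕ, N ≤ n → ∀ x ∈ CompactSp n,
      ∃ g₁ ∈ wordValuesIn w₁ (CompactSp n), ∃ g₂ ∈ wordValuesIn w₂ (CompactSp n),
        x = g₁ * g₂ := by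
  refine eventually_atTop.mp ?_
  filter_upwards [eventually_principalElement_mem_wordValuesIn hw₁,
    eventually_principalElement_mem_wordValuesIn hw₂, eventually_gt_atTop 0] with n h₁ h₂ hn x hx
  obtain ⟨P, hP, Q, hQ, hPQ⟩ := exists_eq_conj_principalElement_mul_conj_principalElement hn hx
  exact ⟨_, conj_mem_wordValuesIn (K := compactSpSubgroup n) hP h₁,
    _, conj_mem_wordValuesIn (K := compactSpSubgroup n) hQ h₂, hPQ⟩
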